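/- arXiv:2505.07037 — 2 statements merged into one kernel-verified Lean document; each statement's English description precedes it below -/
import Mathlib

section
/- (Kuperberg's bound) Let X ⊂ ℝⁿ be a symmetric convex body and ħ > 0. Then the Mahler volume satisfies v(X) = Vol(X)·Vol(X^ħ) ≥ (πħ)ⁿ/(4ⁿ n!). -/
open MeasureTheory
open scoped RealInnerProductSpace

/-- The `ħ`-polar dual of a set `X ⊂ ℝⁿ`: all `p` with `p·x ≤ ħ` for every `x ∈ X`. -/
def polarDualSet (n : ℕ) (hb : ℝ) (X : Set (EuclideanSpace ℝ (Fin n))) :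
    Set (EuclideanSpace ℝ (Fin n)) :=
  {p | ∀ x ∈ X, (⟪p, x⟫ : ℝ) ≤ hb}

/-- Euclidean `n`-space. -/
abbrev KE (n : ℕ) := EuclideanSpace ℝ (Fin n)

/-- The map `(y,z) ↦ (y + s R z, z + c R y)`. -/
noncomputable def kT {n : ℕ} (R : KE n → KE n) (s c : ℝ) (U : KE n × KE n) : KE n × KE n :=
  (U.1 + s • R U.2, U.2 + c • R U.1)

/-- Matrix of a continuous linear endomorphism in the standard basis. -/
noncomputable def kMat {n : ℕ} (A : KE n →L[ℝ] KE n) : Matrix (Fin n) (Fin n) ℝ :=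
  Matrix.of fun i j => (A (EuclideanSpace.single j 1)) i

/-- Derivative of `kT`. -/
noncomputable def kD {n : ℕ} (A B : KE n →L[ℝ] KE n) (s c : ℝ) :
    (KE n × KE n) →L[ℝ] (KE n × KE n) :=
  (ContinuousLinearMap.fst ℝ (KE n) (KE n) + s • B.comp (ContinuousLinearMap.snd ℝ (KE n) (KE n))).prod
  (ContinuousLinearMap.snd ℝ (KE n) (KE n) + c • A.comp (ContinuousLinearMap.fst ℝ (KE n) (KE n)))

lemma kD_det {n : ℕ} (A B : KE n →L[ℝ] KE n) (s c : ℝ) :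
    (kD A B s c).det = (1 - (s * c) • (kMat A * kMat B)).det := by
  let b := (EuclideanSpace.basisFun (Fin n) ℝ).toBasis
  have h : LinearMap.toMatrix (b.prod b) (b.prod b) (kD A B s c : (KE n × KE n) →ₗ[ℝ] (KE n × KE n))
      = Matrix.fromBlocks 1 (s • kMat B) (c • kMat A) 1 := by
    ext i j
    rcases i with i | i <;> rcases j with j | j <;>
      simp [LinearMap.toMatrix_apply, b, kD, kMat, Matrix.one_apply]
  have h2 : (kD A B s c).det = LinearMap.det (kD A B s c : (KE n × KE n) →ₗ[ℝ] (KE n × KE n)) := rfl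
  rw [h2, ← LinearMap.det_toMatrix (b.prod b), h, Matrix.det_fromBlocks_one₁₁]
  simp [smul_smul]

lemma kT_hasFDerivAt {n : ℕ} {R : KE n → KE n} (s c : ℝ) {U : KE n × KE n}
    (h1 : DifferentiableAt ℝ R U.1) (h2 : DifferentiableAt ℝ R U.2) :
    HasFDerivAt (kT R s c) (kD (fderiv ℝ R U.1) (fderiv ℝ R U.2) s c) U := by
  have e1 : HasFDerivAt (fun U : KE n × KE n => R U.1)
      ((fderiv ℝ R U.1).comp (ContinuousLinearMap.fst ℝ (KE n) (KE n))) U :=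
    HasFDerivAt.comp U h1.hasFDerivAt hasFDerivAt_fst
  have e2 : HasFDerivAt (fun U : KE n × KE n => R U.2)
      ((fderiv ℝ R U.2).comp (ContinuousLinearMap.snd ℝ (KE n) (KE n))) U :=
    HasFDerivAt.comp U h2.hasFDerivAt hasFDerivAt_snd
  exact (hasFDerivAt_fst.add (e2.const_smul s)).prodMk (hasFDerivAt_snd.add (e1.const_smul c))

lemma kT_approx {n : ℕ} {R : KE n → KE n} (hR : LipschitzWith 1 R) {s c : ℝ} (k : NNReal)
    (hs : |s| ≤ k) (hc : |c| ≤ k) :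
    ApproximatesLinearOn (kT R s c)
      ((ContinuousLinearEquiv.refl ℝ (KE n × KE n) : (KE n × KE n) ≃L[ℝ] (KE n × KE n)) :
        (KE n × KE n) →L[ℝ] (KE n × KE n)) Set.univ k := by
  intro x _ y _
  have e : kT R s c x - kT R s c y -
      ((ContinuousLinearEquiv.refl ℝ (KE n × KE n) : (KE n × KE n) ≃L[ℝ] (KE n × KE n)) :
        (KE n × KE n) →L[ℝ] (KE n × KE n)) (x - y) =
      (s • (R x.2 - R y.2), c • (R x.1 - R y.1)) := by
    ext <;> simp [kT] <;> ring
  rw [e, Prod.norm_def]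
  have l1 := hR.norm_sub_le x.1 y.1
  have l2 := hR.norm_sub_le x.2 y.2
  have m1 : ‖x.1 - y.1‖ ≤ ‖x - y‖ := norm_fst_le (x - y)
  have m2 : ‖x.2 - y.2‖ ≤ ‖x - y‖ := norm_snd_le (x - y)
  simp only [NNReal.coe_one, one_mul] at l1 l2
  refine max_le ?_ ?_
  · rw [norm_smul, Real.norm_eq_abs]
    exact mul_le_mul hs (l2.trans m2) (norm_nonneg _) k.2
  · rw [norm_smul, Real.norm_eq_abs]
    exact mul_le_mul hc (l1.trans m1) (norm_nonneg _) k.2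

lemma kT_bij {n : ℕ} {R : KE n → KE n} (hR : LipschitzWith 1 R) {s c : ℝ}
    (hs : |s| < 1) (hc : |c| < 1) : Function.Bijective (kT R s c) := by
  let k : NNReal := ⟨max |s| |c|, le_max_of_le_left (abs_nonneg _)⟩
  have hk : k < 1 := by
    rw [← NNReal.coe_lt_coe]; exact max_lt hs hc
  have h := kT_approx hR (s := s) (c := c) k (le_max_left _ _) (le_max_right _ _)
  have hc : Subsingleton (KE n × KE n) ∨
      k < ‖((ContinuousLinearEquiv.refl ℝ (KE n × KE n)).symm :
        (KE n × KE n) →L[ℝ] (KE n × KE n))‖₊⁻¹ := by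
    rcases subsingleton_or_nontrivial (KE n × KE n) with h | h
    · exact Or.inl h
    · right
      have : ‖((ContinuousLinearEquiv.refl ℝ (KE n × KE n)).symm :
        (KE n × KE n) →L[ℝ] (KE n × KE n))‖₊ = 1 := by
        have : ((ContinuousLinearEquiv.refl ℝ (KE n × KE n)).symm :
          (KE n × KE n) →L[ℝ] (KE n × KE n)) = ContinuousLinearMap.id ℝ _ := rfl
        rw [this]
        exact ContinuousLinearMap.nnnorm_id
      rw [this]; simpa using hk
  exact ⟨Set.injOn_univ.1 (h.injOn hc), h.surjective hc⟩

lemma lipschitz_image_null {V : Type*} [NormedAddCommGroup V] [NormedSpace ℝ V]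
    [FiniteDimensional ℝ V] [MeasurableSpace V] [BorelSpace V] (μ : Measure V)
    [μ.IsAddHaarMeasure] {f : V → V} {C : NNReal} (hf : LipschitzWith C f) {s : Set V}
    (hs : μ s = 0) : μ (f '' s) = 0 := by
  have a1 : μ.AbsolutelyContinuous (Measure.hausdorffMeasure (Module.finrank ℝ V)) :=
    Measure.absolutelyContinuous_isAddHaarMeasure _ _
  have a2 : (Measure.hausdorffMeasure (Module.finrank ℝ V)).AbsolutelyContinuous μ :=
    Measure.absolutelyContinuous_isAddHaarMeasure _ _
  apply a1
  have := hf.hausdorffMeasure_image_le (d := Module.finrank ℝ V) (by positivity) s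
  rw [a2 hs, mul_zero] at this
  exact le_antisymm this bot_le

/-- Jacobian factor. -/
noncomputable def kJ {n : ℕ} (R : KE n → KE n) (U : KE n × KE n) : Matrix (Fin n) (Fin n) ℝ :=
  kMat (fderiv ℝ R U.1) * kMat (fderiv ℝ R U.2)

lemma kT_lipschitz {n : ℕ} {R : KE n → KE n} (hR : LipschitzWith 1 R) (s c : ℝ) :
    ∃ C, LipschitzWith C (kT R s c) := by
  let k : NNReal := ⟨max |s| |c|, le_max_of_le_left (abs_nonneg _)⟩
  have h := kT_approx hR (s := s) (c := c) k (le_max_left _ _) (le_max_right _ _)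
  have := h.lipschitz
  exact ⟨_, lipschitzOnWith_univ.1 (lipschitzOnWith_iff_restrict.2 this)⟩

/-- Differentiability set. -/
def kS {n : ℕ} (R : KE n → KE n) : Set (KE n × KE n) :=
  {y | DifferentiableAt ℝ R y} ×ˢ {y | DifferentiableAt ℝ R y}

lemma kS_meas {n : ℕ} (R : KE n → KE n) : MeasurableSet (kS R) :=
  (measurableSet_of_differentiableAt ℝ R).prod (measurableSet_of_differentiableAt ℝ R)

lemma kS_null {n : ℕ} {R : KE n → KE n} (hR : LipschitzWith 1 R) :
    (volume : Measure (KE n × KE n)) (kS R)ᶜ = 0 := by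
  have h := hR.ae_differentiableAt (μ := (volume : Measure (KE n)))
  have h1 : ∀ᵐ U : KE n × KE n, DifferentiableAt ℝ R U.1 :=
    Measure.quasiMeasurePreserving_fst.ae h
  have h2 : ∀ᵐ U : KE n × KE n, DifferentiableAt ℝ R U.2 :=
    Measure.quasiMeasurePreserving_snd.ae h
  have := h1.and h2
  rw [ae_iff] at this
  exact this

instance kHaar {n : ℕ} : (volume : Measure (KE n × KE n)).IsAddHaarMeasure :=
  inferInstanceAs (((volume : Measure (KE n)).prod (volume : Measure (KE n))).IsAddHaarMeasure)

lemma kT_image {n : ℕ} {R : KE n → KE n} (hR : LipschitzWith 1 R) {s c : ℝ}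
    (hs : |s| < 1) (hc : |c| < 1) :
    (kT R s c '' kS R : Set (KE n × KE n)) =ᵐ[volume] Set.univ := by
  obtain ⟨C, hC⟩ := kT_lipschitz hR s c
  rw [ae_eq_univ, ← Set.image_compl_eq (kT_bij hR hs hc)]
  exact lipschitz_image_null _ hC (kS_null hR)

lemma kT_lintegral {n : ℕ} {R : KE n → KE n} (hR : LipschitzWith 1 R) {s c : ℝ}
    (hs : |s| < 1) (hc : |c| < 1) (g : KE n × KE n → ENNReal) :
    ∫⁻ U, ENNReal.ofReal |(1 - (s * c) • kJ R U).det| * g (kT R s c U) = ∫⁻ U, g U := by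
  have h := lintegral_image_eq_lintegral_abs_det_fderiv_mul volume (kS_meas R)
    (f := kT R s c) (f' := fun U => kD (fderiv ℝ R U.1) (fderiv ℝ R U.2) s c)
    (fun U hU => (kT_hasFDerivAt s c hU.1 hU.2).hasFDerivWithinAt) (kT_bij hR hs hc).1.injOn g
  rw [setLIntegral_congr (kT_image hR hs hc),
    setLIntegral_congr (ae_eq_univ.2 (kS_null hR)), setLIntegral_univ, setLIntegral_univ] at h
  simp only [kD_det] at h
  exact h.symm

lemma kT_integral {n : ℕ} {R : KE n → KE n} (hR : LipschitzWith 1 R) {s c : ℝ}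
    (hs : |s| < 1) (hc : |c| < 1) (g : KE n × KE n → ℂ) :
    ∫ U, |(1 - (s * c) • kJ R U).det| • g (kT R s c U) = ∫ U, g U := by
  have h := integral_image_eq_integral_abs_det_fderiv_smul volume (kS_meas R)
    (f := kT R s c) (f' := fun U => kD (fderiv ℝ R U.1) (fderiv ℝ R U.2) s c)
    (fun U hU => (kT_hasFDerivAt s c hU.1 hU.2).hasFDerivWithinAt) (kT_bij hR hs hc).1.injOn g
  rw [setIntegral_congr_set (kT_image hR hs hc),
    setIntegral_congr_set (ae_eq_univ.2 (kS_null hR)), setIntegral_univ, setIntegral_univ] at h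
  simp only [kD_det] at h
  exact h.symm


lemma differentiableOn_integral_of_bound {α : Type*} [MeasurableSpace α] {μ : Measure α}
    {F : ℂ → α → ℂ} {Ω : Set ℂ} (hΩ : IsOpen Ω)
    (hm : ∀ τ ∈ Ω, AEStronglyMeasurable (F τ) μ)
    (hd : ∀ a, DifferentiableOn ℂ (fun τ => F τ a) Ω)
    {bound : α → ℝ} (hb : Integrable bound μ) (hle : ∀ τ ∈ Ω, ∀ a, ‖F τ a‖ ≤ bound a) :
    DifferentiableOn ℂ (fun τ => ∫ a, F τ a ∂μ) Ω := by
  intro τ₀ hτ₀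
  obtain ⟨ε, hε, hball⟩ := Metric.isOpen_iff.1 hΩ τ₀ hτ₀
  have hsub : ∀ τ ∈ Metric.ball τ₀ (ε / 2), Metric.closedBall τ (ε / 4) ⊆ Ω := by
    intro τ hτ w hw
    apply hball
    rw [Metric.mem_ball] at *
    rw [Metric.mem_closedBall] at hw
    linarith [dist_triangle w τ τ₀]
  have hmemΩ : ∀ τ ∈ Metric.ball τ₀ (ε / 2), τ ∈ Ω := fun τ hτ =>
    hsub τ hτ (Metric.mem_closedBall_self (by positivity))
  have hderiv : ∀ a, ∀ τ ∈ Ω, HasDerivAt (fun τ => F τ a) (deriv (fun τ => F τ a) τ) τ :=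
    fun a τ hτ => ((hd a).differentiableAt (hΩ.mem_nhds hτ)).hasDerivAt
  have key := hasDerivAt_integral_of_dominated_loc_of_deriv_le (μ := μ) (F := F) (x₀ := τ₀)
    (F' := fun τ a => deriv (fun τ => F τ a) τ) (s := Metric.ball τ₀ (ε / 2))
    (bound := fun a => bound a / (ε / 4))
    (Metric.ball_mem_nhds _ (by positivity))
    (Filter.eventually_of_mem (hΩ.mem_nhds hτ₀) hm)
    (hb.mono' (hm _ hτ₀) (Filter.Eventually.of_forall (hle _ hτ₀))) ?_ ?_
    (hb.div_const _) ?_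
  · exact key.2.differentiableAt.differentiableWithinAt
  · have hseq : Filter.Tendsto (fun k : ℕ => ((ε / 2 * (1 / ((k : ℝ) + 1)) : ℝ) : ℂ))
        Filter.atTop (nhdsWithin 0 {0}ᶜ) := by
      rw [tendsto_nhdsWithin_iff]
      constructor
      · have h := (tendsto_one_div_add_atTop_nhds_zero_nat (𝕜 := ℝ)).const_mul (ε / 2)
        rw [mul_zero] at h
        exact (Complex.continuous_ofReal.tendsto' 0 0 (by simp)).comp h
      · refine Filter.Eventually.of_forall fun k => ?_
        have : ε / 2 * (1 / ((k : ℝ) + 1)) ≠ 0 := by positivity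
        simpa only [Set.mem_compl_iff, Set.mem_singleton_iff, Complex.ofReal_eq_zero] using this
    refine aestronglyMeasurable_of_tendsto_ae Filter.atTop
      (f := fun (k : ℕ) a => ((ε / 2 * (1 / ((k : ℝ) + 1)) : ℝ) : ℂ)⁻¹ •
        (F (τ₀ + ((ε / 2 * (1 / ((k : ℝ) + 1)) : ℝ) : ℂ)) a - F τ₀ a)) ?_ ?_
    · intro k
      have hin : τ₀ + ((ε / 2 * (1 / ((k : ℝ) + 1)) : ℝ) : ℂ) ∈ Ω := ?_
      · exact ((hm _ hin).sub (hm _ hτ₀)).const_smul (((ε / 2 * (1 / ((k : ℝ) + 1)) : ℝ) : ℂ)⁻¹)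
      apply hball
      rw [Metric.mem_ball, dist_eq_norm, add_sub_cancel_left, Complex.norm_real, Real.norm_eq_abs,
        abs_of_pos (by positivity)]
      have : 1 / ((k : ℝ) + 1) ≤ 1 := by
        rw [div_le_one (by positivity)]; linarith [(Nat.cast_nonneg k : (0 : ℝ) ≤ k)]
      nlinarith
    · refine Filter.Eventually.of_forall fun a => ?_
      exact (hasDerivAt_iff_tendsto_slope_zero.1 (hderiv a τ₀ hτ₀)).comp hseq
  · refine Filter.Eventually.of_forall fun a τ hτ => ?_
    refine Complex.norm_deriv_le_of_forall_mem_sphere_norm_le (by positivity) ?_ ?_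
    · apply DifferentiableOn.diffContOnCl
      rw [closure_ball _ (by positivity)]
      exact (hd a).mono (hsub τ hτ)
    · intro z hz
      exact hle z (hsub τ hτ (Metric.sphere_subset_closedBall hz)) a
  · exact Filter.Eventually.of_forall fun a τ hτ => hderiv a τ (hmemΩ τ hτ)

/-- squared norms -/
noncomputable def ka {n : ℕ} (U : KE n × KE n) : ℝ := ‖U.1‖ ^ 2 + ‖U.2‖ ^ 2

/-- cross term -/
noncomputable def kb {n : ℕ} (R : KE n → KE n) (U : KE n × KE n) : ℝ :=
  ⟪U.1, R U.2⟫ - ⟪U.2, R U.1⟫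

/-- image squared norms -/
noncomputable def kc {n : ℕ} (R : KE n → KE n) (U : KE n × KE n) : ℝ :=
  ‖R U.2‖ ^ 2 + ‖R U.1‖ ^ 2

/-- the integrand -/
noncomputable def kF {n : ℕ} (R : KE n → KE n) (τ : ℂ) (U : KE n × KE n) : ℂ :=
  Complex.exp (-(ka U + 2 * τ * kb R U + τ ^ 2 * kc R U) / 4) *
    (1 + τ ^ 2 • (kJ R U).map Complex.ofReal).det

lemma norm_le_of_lip {n : ℕ} {R : KE n → KE n} (hR : LipschitzWith 1 R) (h0 : R 0 = 0) (y : KE n) :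
    ‖R y‖ ≤ ‖y‖ := by
  have := hR.norm_sub_le y 0
  simpa [h0] using this

lemma ka_nonneg {n : ℕ} (U : KE n × KE n) : 0 ≤ ka U := by unfold ka; positivity

lemma kc_nonneg {n : ℕ} (R : KE n → KE n) (U : KE n × KE n) : 0 ≤ kc R U := by unfold kc; positivity

lemma kc_le {n : ℕ} {R : KE n → KE n} (hR : LipschitzWith 1 R) (h0 : R 0 = 0) (U : KE n × KE n) :
    kc R U ≤ ka U := by
  have h1 := norm_le_of_lip hR h0 U.1
  have h2 := norm_le_of_lip hR h0 U.2
  have := pow_le_pow_left₀ (norm_nonneg _) h1 2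
  have := pow_le_pow_left₀ (norm_nonneg _) h2 2
  unfold kc ka; linarith

lemma kb_le {n : ℕ} {R : KE n → KE n} (hR : LipschitzWith 1 R) (h0 : R 0 = 0) (U : KE n × KE n) :
    |kb R U| ≤ ka U := by
  have h1 := norm_le_of_lip hR h0 U.1
  have h2 := norm_le_of_lip hR h0 U.2
  have e1 := abs_real_inner_le_norm U.1 (R U.2)
  have e2 := abs_real_inner_le_norm U.2 (R U.1)
  have e3 := mul_le_mul_of_nonneg_left h2 (norm_nonneg U.1)
  have e4 := mul_le_mul_of_nonneg_left h1 (norm_nonneg U.2)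
  unfold kb ka
  have := abs_sub ⟪U.1, R U.2⟫ ⟪U.2, R U.1⟫
  nlinarith [sq_nonneg (‖U.1‖ - ‖U.2‖)]

lemma kMat_le {n : ℕ} {R : KE n → KE n} (hR : LipschitzWith 1 R) (y : KE n) (i j : Fin n) :
    |kMat (fderiv ℝ R y) i j| ≤ 1 := by
  have h1 : ‖fderiv ℝ R y‖ ≤ (1 : NNReal) := norm_fderiv_le_of_lipschitz ℝ hR
  have h2 := (fderiv ℝ R y).le_opNorm (EuclideanSpace.single j 1)
  have h3 := PiLp.norm_apply_le (fderiv ℝ R y (EuclideanSpace.single j 1)) i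
  simp only [PiLp.norm_single, norm_one, mul_one] at h2
  simp only [NNReal.coe_one] at h1
  simp only [kMat, Matrix.of_apply]
  rw [← Real.norm_eq_abs]
  linarith

lemma kJ_le {n : ℕ} {R : KE n → KE n} (hR : LipschitzWith 1 R) (U : KE n × KE n) (i j : Fin n) :
    |kJ R U i j| ≤ n := by
  unfold kJ
  rw [Matrix.mul_apply]
  refine (Finset.abs_sum_le_sum_abs _ _).trans ?_
  calc _ ≤ ∑ _k : Fin n, (1 : ℝ) := by
        refine Finset.sum_le_sum fun k _ => ?_
        rw [abs_mul]
        exact mul_le_one₀ (kMat_le hR _ _ _) (abs_nonneg _) (kMat_le hR _ _ _)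
    _ = n := by simp

/-- bound for the determinant -/
noncomputable def kC (n : ℕ) : ℝ := (n.factorial : ℝ) * (1 + 2 * n) ^ n

lemma kdet_le {n : ℕ} {R : KE n → KE n} (hR : LipschitzWith 1 R) (U : KE n × KE n) {c : ℂ}
    (hc : ‖c‖ ≤ 2) : ‖(1 + c • (kJ R U).map Complex.ofReal).det‖ ≤ kC n := by
  let av : AbsoluteValue ℂ ℝ := ⟨⟨fun z => ‖z‖, norm_mul⟩, norm_nonneg, fun _ => norm_eq_zero,
    norm_add_le⟩
  have := Matrix.det_le (A := 1 + c • (kJ R U).map Complex.ofReal) (abv := av)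
    (x := 1 + 2 * n) ?_
  · simpa [kC, av] using this
  · intro i j
    change ‖(1 + c • (kJ R U).map Complex.ofReal) i j‖ ≤ _
    simp only [Matrix.add_apply, Matrix.smul_apply, Matrix.map_apply]
    refine (norm_add_le _ _).trans (add_le_add ?_ ?_)
    · rw [Matrix.one_apply]; split_ifs <;> simp
    · rw [norm_smul, Complex.norm_real, Real.norm_eq_abs]
      exact mul_le_mul hc (kJ_le hR U i j) (abs_nonneg _) (by norm_num)

lemma measurable_kMat {n : ℕ} (R : KE n → KE n) (i j : Fin n) :
    Measurable fun y => kMat (fderiv ℝ R y) i j := by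
  simp only [kMat, Matrix.of_apply]
  have h := measurable_fderiv_apply_const ℝ R (EuclideanSpace.single j 1)
  have h2 : Measurable fun v : KE n => v i := (EuclideanSpace.proj i : KE n →L[ℝ] ℝ).continuous.measurable
  exact h2.comp h

lemma measurable_kJ {n : ℕ} (R : KE n → KE n) (i j : Fin n) :
    Measurable fun U => kJ R U i j := by
  unfold kJ
  simp only [Matrix.mul_apply]
  refine Finset.measurable_sum _ fun k _ => ?_
  exact ((measurable_kMat R i k).comp measurable_fst).mul ((measurable_kMat R k j).comp measurable_snd)

lemma measurable_kdet {n : ℕ} (R : KE n → KE n) (c : ℂ) :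
    Measurable fun U => (1 + c • (kJ R U).map Complex.ofReal).det := by
  simp only [Matrix.det_apply]
  refine Finset.measurable_sum _ fun σ _ => ?_
  refine Measurable.const_smul ?_ _
  refine Finset.measurable_prod _ fun i _ => ?_
  simp only [Matrix.add_apply, Matrix.smul_apply, Matrix.map_apply]
  exact measurable_const.add ((Complex.measurable_ofReal.comp (measurable_kJ R _ _)).const_smul c)

lemma measurable_kF {n : ℕ} {R : KE n → KE n} (hR : LipschitzWith 1 R) (τ : ℂ) :
    Measurable (kF R τ) := by
  have hc := hR.continuous
  have h : Measurable (fun U : KE n × KE n =>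
    Complex.exp (-(ka U + 2 * τ * kb R U + τ ^ 2 * kc R U) / 4)) := by
    apply Continuous.measurable
    unfold ka kb kc
    fun_prop
  exact h.mul (measurable_kdet R _)

lemma kF_exp_norm {n : ℕ} (R : KE n → KE n) (τ : ℂ) (U : KE n × KE n) :
    ‖Complex.exp (-(ka U + 2 * τ * kb R U + τ ^ 2 * kc R U) / 4)‖ =
      Real.exp (-(ka U + 2 * τ.re * kb R U + (τ.re ^ 2 - τ.im ^ 2) * kc R U) / 4) := by
  rw [Complex.norm_exp]
  congr 1
  simp [pow_two]

/-- The rectangle. -/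
def kRect (ρ T : ℝ) : Set ℂ := {τ | |τ.re| < ρ ∧ |τ.im| < T}

lemma kRect_open (ρ T : ℝ) : IsOpen (kRect ρ T) :=
  (isOpen_lt (f := fun τ : ℂ => |τ.re|) (g := fun _ => ρ) (by fun_prop) (by fun_prop)).inter
    (isOpen_lt (f := fun τ : ℂ => |τ.im|) (g := fun _ => T) (by fun_prop) (by fun_prop))

lemma kRect_convex (ρ T : ℝ) : Convex ℝ (kRect ρ T) := by
  intro x hx y hy a b ha hb hab
  obtain ⟨h1, h2⟩ := hx
  obtain ⟨h3, h4⟩ := hy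
  rw [abs_lt] at h1 h2 h3 h4
  constructor <;> rw [abs_lt] <;> simp <;> constructor <;>
    (rcases ha.eq_or_lt with rfl | ha'
     · have : b = 1 := by linarith
       subst this; linarith
     · nlinarith)

lemma kF_bound {n : ℕ} {R : KE n → KE n} (hR : LipschitzWith 1 R) (h0 : R 0 = 0) {ρ T : ℝ}
    (hT1 : T ≤ 1) (hρ : ρ ≤ 1) {τ : ℂ} (hτ : τ ∈ kRect ρ T)
    (U : KE n × KE n) :
    ‖kF R τ U‖ ≤ Real.exp (-((1 - 2 * ρ - T ^ 2) / 4) * ka U) * kC n := by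
  obtain ⟨h1, h2⟩ := hτ
  unfold kF
  rw [norm_mul, kF_exp_norm]
  have ha := ka_nonneg U
  have hc := kc_nonneg R U
  have hca := kc_le hR h0 U
  have hba := kb_le hR h0 U
  have hre : τ.re ^ 2 ≤ 1 := by
    rw [sq_le_one_iff_abs_le_one]; linarith
  have him : τ.im ^ 2 ≤ T ^ 2 := by
    rw [← sq_abs]; exact pow_le_pow_left₀ (abs_nonneg _) h2.le 2
  have hT2 : T ^ 2 ≤ 1 := by
    have := abs_nonneg τ.im
    nlinarith
  refine mul_le_mul (Real.exp_le_exp.2 ?_) (kdet_le hR U ?_) (norm_nonneg _) (Real.exp_nonneg _)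
  · have e1 : -(ρ * ka U) ≤ τ.re * kb R U := by
      have : |τ.re * kb R U| ≤ ρ * ka U := by
        rw [abs_mul]
        exact mul_le_mul h1.le hba (abs_nonneg _) ((abs_nonneg _).trans h1.le)
      linarith [neg_abs_le (τ.re * kb R U)]
    have e2 : τ.im ^ 2 * kc R U ≤ T ^ 2 * ka U :=
      mul_le_mul him hca hc (sq_nonneg _)
    have e3 : 0 ≤ τ.re ^ 2 * kc R U := by positivity
    nlinarith
  · rw [norm_pow, Complex.sq_norm, Complex.normSq_apply]
    nlinarith

lemma integrable_gauss {n : ℕ} {b : ℝ} (hb : 0 < b) :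
    Integrable (fun U : KE n × KE n => Real.exp (-b * ka U)) := by
  have h : Integrable (fun v : KE n => Real.exp (-b * ‖v‖ ^ 2)) := by
    have h := GaussianFourier.integrable_cexp_neg_mul_sq_norm_add (V := KE n) (b := (b : ℂ))
      (by simpa using hb) 0 0
    have := h.norm
    refine this.congr (Filter.Eventually.of_forall fun v => ?_)
    simp [Complex.norm_exp, ← Complex.ofReal_pow]
  have := h.mul_prod h
  refine this.congr (Filter.Eventually.of_forall fun v => ?_)
  simp only [ka, ← Real.exp_add]
  ring_nf

lemma integral_gauss {n : ℕ} {b : ℝ} (hb : 0 < b) :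
    ∫ U : KE n × KE n, Real.exp (-b * ka U) = (Real.pi / b) ^ n := by
  have h : ∀ U : KE n × KE n, Real.exp (-b * ka U) =
      Real.exp (-b * ‖U.1‖ ^ 2) * Real.exp (-b * ‖U.2‖ ^ 2) := by
    intro U
    simp only [ka, ← Real.exp_add]
    ring_nf
  simp_rw [h]
  have e := integral_prod_mul (μ := (volume : Measure (KE n))) (ν := (volume : Measure (KE n)))
    (fun v : KE n => Real.exp (-b * ‖v‖ ^ 2)) (fun v : KE n => Real.exp (-b * ‖v‖ ^ 2))
  refine e.trans ?_
  rw [GaussianFourier.integral_rexp_neg_mul_sq_norm hb, ← Real.rpow_add (by positivity)]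
  simp


lemma kdet_pos {n : ℕ} {R : KE n → KE n} (hR : LipschitzWith 1 R) :
    ∃ δ > 0, ∀ r : ℝ, |r| < δ → ∀ U, 0 < (1 + r • kJ R U).det := by
  have hc : Continuous fun m : Fin n → Fin n → ℝ => (Matrix.of m).det := by
    refine Continuous.matrix_det ?_
    exact continuous_id
  have h1 : ∀ᶠ m in nhds (fun i j => (1 : Matrix (Fin n) (Fin n) ℝ) i j),
      0 < (Matrix.of m).det := by
    refine hc.continuousAt.eventually_const_lt ?_
    change 0 < (1 : Matrix (Fin n) (Fin n) ℝ).det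
    simp
  rw [Metric.eventually_nhds_iff] at h1
  obtain ⟨ε, hε, h⟩ := h1
  refine ⟨ε / (2 * (n + 1)), by positivity, fun r hr U => ?_⟩
  refine h (y := fun i j => (1 + r • kJ R U) i j) ?_
  refine lt_of_le_of_lt (b := ε / 2) ?_ (by linarith)
  rw [dist_pi_le_iff (by positivity)]
  intro i
  rw [dist_pi_le_iff (by positivity)]
  intro j
  rw [dist_eq_norm, Matrix.add_apply, add_sub_cancel_left,
    Matrix.smul_apply, smul_eq_mul, norm_mul, Real.norm_eq_abs, Real.norm_eq_abs]
  have := kJ_le hR U i j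
  rw [lt_div_iff₀ (by positivity)] at hr
  nlinarith [abs_nonneg r, abs_nonneg (kJ R U i j)]

lemma kdet_ofReal {n : ℕ} (R : KE n → KE n) (U : KE n × KE n) (r : ℝ) :
    (1 + (r : ℂ) • (kJ R U).map Complex.ofReal).det = ((1 + r • kJ R U).det : ℝ) := by
  have : (1 + (r : ℂ) • (kJ R U).map Complex.ofReal) =
      (1 + r • kJ R U).map Complex.ofRealHom := by
    ext i j
    simp [Matrix.one_apply]
    split_ifs <;> simp
  rw [this]
  exact (RingHom.map_det Complex.ofRealHom _).symm

lemma ka_kT {n : ℕ} (R : KE n → KE n) (s : ℝ) (U : KE n × KE n) :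
    ka (kT R s (-s) U) = ka U + 2 * s * kb R U + s ^ 2 * kc R U := by
  unfold ka kT kb kc
  simp only [neg_smul, ← sub_eq_add_neg]
  rw [norm_add_sq_real, norm_sub_sq_real, norm_smul, norm_smul, inner_smul_right, inner_smul_right,
    mul_pow, mul_pow, Real.norm_eq_abs, sq_abs]
  ring

lemma kF_real {n : ℕ} {R : KE n → KE n} (hR : LipschitzWith 1 R) :
    ∃ δ > 0, ∀ s : ℝ, |s| < δ → ∫ U, kF R (s : ℂ) U = (((4 * Real.pi) ^ n : ℝ) : ℂ) := by
  obtain ⟨δ, hδ, hpos⟩ := kdet_pos hR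
  refine ⟨min δ 1, by positivity, fun s hs => ?_⟩
  have hs1 : |s| < 1 := hs.trans_le (min_le_right _ _)
  have hs2 : |s ^ 2| < δ := by
    rw [abs_pow]
    have : |s| < δ := hs.trans_le (min_le_left _ _)
    nlinarith [abs_nonneg s]
  have h := kT_integral hR (s := s) (c := -s) hs1 (by rwa [abs_neg])
    (fun U => ((Real.exp (-(1 / 4) * ka U) : ℝ) : ℂ))
  rw [integral_complex_ofReal, integral_gauss (by norm_num)] at h
  rw [show Real.pi / (1 / 4) = 4 * Real.pi by ring] at h
  rw [← h]
  refine integral_congr_ae (Filter.Eventually.of_forall fun U => ?_)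
  simp only
  have e1 : (1 - (s * -s) • kJ R U) = 1 + (s ^ 2) • kJ R U := by
    rw [mul_neg, neg_smul, sub_neg_eq_add, pow_two]
  rw [e1, abs_of_pos (hpos _ hs2 U), ka_kT, kF]
  have e2 := kdet_ofReal R U (s ^ 2)
  push_cast at e2
  rw [e2, Complex.real_smul, mul_comm]
  congr 1
  push_cast
  congr 1
  ring

lemma kF_main {n : ℕ} {R : KE n → KE n} (hR : LipschitzWith 1 R) (h0 : R 0 = 0) {t : ℝ}
    (ht0 : 0 ≤ t) (ht1 : t < 1) :
    ∫ U, kF R (t * Complex.I) U = (((4 * Real.pi) ^ n : ℝ) : ℂ) := by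
  set T : ℝ := (1 + t) / 2 with hT
  have hT1 : T < 1 := by linarith
  have hT0 : 0 < T := by linarith
  set ρ : ℝ := (1 - T ^ 2) / 4 with hρ
  have hTT : T ^ 2 < 1 := by nlinarith
  have hρ0 : 0 < ρ := by linarith
  have hρ1 : ρ ≤ 1 := by nlinarith
  have hpos : 0 < (1 - 2 * ρ - T ^ 2) / 4 := by rw [hρ]; linarith
  have hopen := kRect_open ρ T
  have hdiff : DifferentiableOn ℂ (fun τ => ∫ U, kF R τ U) (kRect ρ T) := by
    refine differentiableOn_integral_of_bound hopen
      (fun τ _ => (measurable_kF hR τ).aestronglyMeasurable) (fun U => ?_)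
      ((integrable_gauss hpos).mul_const (kC n))
      (fun τ hτ U => kF_bound hR h0 hT1.le hρ1 hτ U)
    unfold kF
    refine Differentiable.differentiableOn (Differentiable.mul (by fun_prop) ?_)
    simp only [Matrix.det_apply, Matrix.add_apply, Matrix.smul_apply, Matrix.map_apply]
    fun_prop
  obtain ⟨δ, hδ, hreal⟩ := kF_real hR
  have hz : (0 : ℂ) ∈ kRect ρ T := by simp [kRect, hρ0, hT0]
  have htm : (t * Complex.I) ∈ kRect ρ T := by
    simp only [kRect, Set.mem_ofPred_eq]
    simp [hρ0, abs_of_nonneg ht0]; linarith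
  have := (hdiff.analyticOnNhd hopen).eqOn_of_preconnected_of_frequently_eq
    (g := fun _ => (((4 * Real.pi) ^ n : ℝ) : ℂ)) analyticOnNhd_const
    (kRect_convex ρ T).isPreconnected hz ?_
  · exact this htm
  · have hseq : Filter.Tendsto (fun k : ℕ => ((δ / 2 * (1 / ((k : ℝ) + 1)) : ℝ) : ℂ))
        Filter.atTop (nhdsWithin 0 {0}ᶜ) := by
      rw [tendsto_nhdsWithin_iff]
      constructor
      · have h := (tendsto_one_div_add_atTop_nhds_zero_nat (𝕜 := ℝ)).const_mul (δ / 2)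
        rw [mul_zero] at h
        exact (Complex.continuous_ofReal.tendsto' 0 0 (by simp)).comp h
      · refine Filter.Eventually.of_forall fun k => ?_
        have : δ / 2 * (1 / ((k : ℝ) + 1)) ≠ 0 := by positivity
        simpa only [Set.mem_compl_iff, Set.mem_singleton_iff, Complex.ofReal_eq_zero] using this
    refine hseq.frequently (Filter.Frequently.of_forall fun k => ?_)
    apply hreal
    rw [abs_of_pos (by positivity)]
    have : 1 / ((k : ℝ) + 1) ≤ 1 := by
      rw [div_le_one (by positivity)]; linarith [(Nat.cast_nonneg k : (0 : ℝ) ≤ k)]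
    nlinarith

/-- real integrand -/
noncomputable def kG {n : ℕ} (R : KE n → KE n) (t : ℝ) (U : KE n × KE n) : ℝ :=
  Real.exp (-(ka U - t ^ 2 * kc R U) / 4) * |(1 - (t * t) • kJ R U).det|

lemma kF_norm {n : ℕ} (R : KE n → KE n) (t : ℝ) (U : KE n × KE n) :
    ‖kF R (t * Complex.I) U‖ = kG R t U := by
  unfold kF kG
  rw [norm_mul, kF_exp_norm]
  have e : ((t : ℂ) * Complex.I) ^ 2 = ((-(t * t) : ℝ) : ℂ) := by
    rw [mul_pow, Complex.I_sq]; push_cast; ring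
  rw [e, kdet_ofReal, Complex.norm_real, Real.norm_eq_abs, neg_smul, ← sub_eq_add_neg]
  congr 2
  simp
  ring

lemma kG_lower {n : ℕ} {R : KE n → KE n} (hR : LipschitzWith 1 R) (h0 : R 0 = 0) {t : ℝ}
    (ht0 : 0 ≤ t) (ht1 : t < 1) : (4 * Real.pi) ^ n ≤ ∫ U, kG R t U := by
  have h := kF_main hR h0 ht0 ht1
  have h2 := norm_integral_le_integral_norm (μ := volume) (kF R (t * Complex.I))
  rw [h, Complex.norm_real, Real.norm_eq_abs, abs_of_nonneg (by positivity)] at h2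
  simpa only [kF_norm] using h2

lemma kG_le {n : ℕ} {R : KE n → KE n} (hR : LipschitzWith 1 R) {t : ℝ}
    (ht0 : 0 ≤ t) (ht1 : t ≤ 1) (U : KE n × KE n) :
    kG R t U ≤ Real.exp (-(ka U - kc R U) / 4) * kC n := by
  have hc := kc_nonneg R U
  have ht : t ^ 2 ≤ 1 := by nlinarith
  refine mul_le_mul (Real.exp_le_exp.2 (by nlinarith)) ?_ (abs_nonneg _) (Real.exp_nonneg _)
  have h := kdet_le hR U (c := ((-(t * t) : ℝ) : ℂ)) (by
    rw [Complex.norm_real, Real.norm_eq_abs, abs_neg, abs_of_nonneg (by positivity)]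
    nlinarith)
  rwa [kdet_ofReal, Complex.norm_real, Real.norm_eq_abs, neg_smul, ← sub_eq_add_neg] at h

lemma measurable_kG {n : ℕ} {R : KE n → KE n} (hR : LipschitzWith 1 R) (t : ℝ) :
    Measurable (kG R t) := by
  have : kG R t = fun U => ‖kF R (t * Complex.I) U‖ := by
    ext U; rw [kF_norm]
  rw [this]
  exact (measurable_kF hR _).norm

/-- the sequence increasing to one -/
noncomputable def kt (k : ℕ) : ℝ := 1 - 1 / ((k : ℝ) + 1)

lemma kt_nonneg (k : ℕ) : 0 ≤ kt k := by
  have : 1 / ((k : ℝ) + 1) ≤ 1 := by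
    rw [div_le_one (by positivity)]; linarith [(Nat.cast_nonneg k : (0 : ℝ) ≤ k)]
  unfold kt; linarith

lemma kt_lt (k : ℕ) : kt k < 1 := by
  have : 0 < 1 / ((k : ℝ) + 1) := by positivity
  unfold kt; linarith

lemma kt_tendsto : Filter.Tendsto kt Filter.atTop (nhds 1) := by
  have h := (tendsto_one_div_add_atTop_nhds_zero_nat (𝕜 := ℝ)).const_sub 1
  rw [sub_zero] at h
  exact h

lemma kdet_cont {n : ℕ} (R : KE n → KE n) (U : KE n × KE n) :
    Continuous fun t : ℝ => |(1 - (t * t) • kJ R U).det| := by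
  refine Continuous.abs (Continuous.matrix_det ?_)
  fun_prop

lemma kG_one {n : ℕ} {R : KE n → KE n} (hR : LipschitzWith 1 R) (h0 : R 0 = 0)
    (hint : Integrable (fun U : KE n × KE n => Real.exp (-(ka U - kc R U) / 4))) :
    ENNReal.ofReal ((4 * Real.pi) ^ n) ≤ ∫⁻ U, ENNReal.ofReal (kG R 1 U) := by
  have hlim : Filter.Tendsto (fun k => ∫ U, kG R (kt k) U) Filter.atTop
      (nhds (∫ U, kG R 1 U)) := by
    refine tendsto_integral_of_dominated_convergence _
      (fun k => (measurable_kG hR _).aestronglyMeasurable) (hint.mul_const (kC n)) ?_ ?_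
    · intro k
      refine Filter.Eventually.of_forall fun U => ?_
      rw [Real.norm_eq_abs, abs_of_nonneg (by unfold kG; positivity)]
      exact kG_le hR (kt_nonneg k) (kt_lt k).le U
    · refine Filter.Eventually.of_forall fun U => ?_
      have : Continuous fun t => kG R t U := by
        unfold kG
        exact Continuous.mul (by fun_prop) (kdet_cont R U)
      exact (this.tendsto 1).comp kt_tendsto
  have hle : (4 * Real.pi) ^ n ≤ ∫ U, kG R 1 U :=
    ge_of_tendsto' hlim fun k => kG_lower hR h0 (kt_nonneg k) (kt_lt k)
  have hi : Integrable (kG R 1) := by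
    refine (hint.mul_const (kC n)).mono' (measurable_kG hR _).aestronglyMeasurable ?_
    refine Filter.Eventually.of_forall fun U => ?_
    rw [Real.norm_eq_abs, abs_of_nonneg (by unfold kG; positivity)]
    exact kG_le hR zero_le_one le_rfl U
  rw [← ofReal_integral_eq_lintegral_ofReal hi
    (Filter.Eventually.of_forall fun U => by unfold kG; positivity)]
  exact ENNReal.ofReal_le_ofReal hle

lemma kT_cont {n : ℕ} {R : KE n → KE n} (hR : LipschitzWith 1 R) (s c : ℝ) :
    Continuous (kT R s c) := by
  obtain ⟨C, hC⟩ := kT_lipschitz hR s c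
  exact hC.continuous

lemma kFatou {n : ℕ} {R : KE n → KE n} (hR : LipschitzWith 1 R) (h0 : R 0 = 0)
    (hint : Integrable (fun U : KE n × KE n => Real.exp (-(ka U - kc R U) / 4)))
    (g : KE n × KE n → ENNReal) (hg : Measurable g)
    (hlim : ∀ U, ∃ L : ℝ, Filter.Tendsto (fun k => g (kT R (kt k) (kt k) U)) Filter.atTop
      (nhds (ENNReal.ofReal L)) ∧ Real.exp (-(ka U - kc R U) / 4) ≤ L) :
    ENNReal.ofReal ((4 * Real.pi) ^ n) ≤ ∫⁻ U, g U := by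
  refine (kG_one hR h0 hint).trans ?_
  have habs : ∀ k, |kt k| < 1 := fun k => by
    rw [abs_of_nonneg (kt_nonneg k)]; exact kt_lt k
  have hF := lintegral_liminf_le (u := Filter.atTop) (μ := (volume : Measure (KE n × KE n)))
    (f := fun k U => ENNReal.ofReal |(1 - (kt k * kt k) • kJ R U).det| * g (kT R (kt k) (kt k) U))
    (fun k => by
      refine Measurable.mul ?_ (hg.comp (kT_cont hR _ _).measurable)
      have h := (measurable_kdet R ((-(kt k * kt k) : ℝ) : ℂ)).norm
      simp only [kdet_ofReal, Complex.norm_real, Real.norm_eq_abs, neg_smul, ← sub_eq_add_neg] at h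
      exact h.ennreal_ofReal)
  simp only [kT_lintegral hR (habs _) (habs _), Filter.liminf_const] at hF
  refine le_trans (lintegral_mono fun U => ?_) hF
  obtain ⟨L, hL, hle⟩ := hlim U
  have h1 : Filter.Tendsto (fun k => ENNReal.ofReal |(1 - (kt k * kt k) • kJ R U).det|)
      Filter.atTop (nhds (ENNReal.ofReal |(1 - ((1 : ℝ) * 1) • kJ R U).det|)) :=
    ((ENNReal.continuous_ofReal.comp (kdet_cont R U)).tendsto 1).comp kt_tendsto
  have h2 := ENNReal.Tendsto.mul h1 (Or.inr ENNReal.ofReal_ne_top) hL (Or.inr ENNReal.ofReal_ne_top)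
  rw [h2.liminf_eq, ← ENNReal.ofReal_mul (abs_nonneg _)]
  apply ENNReal.ofReal_le_ofReal
  unfold kG
  rw [one_pow, one_mul, mul_comm]
  exact mul_le_mul_of_nonneg_left hle (abs_nonneg _)


/-- support function -/
noncomputable def kh {n : ℕ} (K : Set (KE n)) (ξ : KE n) : ℝ := sSup ((fun x => ⟪ξ, x⟫) '' K)

lemma kh_bdd {n : ℕ} {K : Set (KE n)} (hK : IsCompact K) (ξ : KE n) :
    BddAbove ((fun x => ⟪ξ, x⟫) '' K) :=
  (hK.image (by fun_prop)).bddAbove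

lemma inner_le_kh {n : ℕ} {K : Set (KE n)} (hK : IsCompact K) (ξ : KE n) {x : KE n} (hx : x ∈ K) :
    ⟪ξ, x⟫ ≤ kh K ξ := le_csSup (kh_bdd hK ξ) ⟨x, hx, rfl⟩

lemma kh_le {n : ℕ} {K : Set (KE n)} (hne : K.Nonempty) (ξ : KE n) {M : ℝ}
    (h : ∀ x ∈ K, ⟪ξ, x⟫ ≤ M) : kh K ξ ≤ M := by
  refine csSup_le (hne.image _) ?_
  rintro _ ⟨x, hx, rfl⟩
  exact h x hx

lemma kh_add {n : ℕ} {K : Set (KE n)} (hK : IsCompact K) (hne : K.Nonempty) (ξ η : KE n) :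
    kh K (ξ + η) ≤ kh K ξ + kh K η := by
  refine kh_le hne _ fun x hx => ?_
  rw [inner_add_left]
  exact add_le_add (inner_le_kh hK ξ hx) (inner_le_kh hK η hx)

lemma kh_neg_le {n : ℕ} {K : Set (KE n)} (hK : IsCompact K) (hne : K.Nonempty)
    (hsym : ∀ x ∈ K, -x ∈ K) (ξ : KE n) : kh K (-ξ) ≤ kh K ξ := by
  refine kh_le hne _ fun x hx => ?_
  rw [inner_neg_left, ← inner_neg_right]
  exact inner_le_kh hK ξ (hsym x hx)

lemma kh_neg {n : ℕ} {K : Set (KE n)} (hK : IsCompact K) (hne : K.Nonempty)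
    (hsym : ∀ x ∈ K, -x ∈ K) (ξ : KE n) : kh K (-ξ) = kh K ξ := by
  refine le_antisymm (kh_neg_le hK hne hsym ξ) ?_
  have := kh_neg_le hK hne hsym (-ξ)
  rwa [neg_neg] at this

lemma kh_smul_le {n : ℕ} {K : Set (KE n)} (hK : IsCompact K) (hne : K.Nonempty)
    (hsym : ∀ x ∈ K, -x ∈ K) (r : ℝ) (ξ : KE n) : kh K (r • ξ) ≤ |r| * kh K ξ := by
  refine kh_le hne _ fun x hx => ?_
  rw [real_inner_smul_left]
  rcases le_total 0 r with hr | hr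
  · rw [abs_of_nonneg hr]
    exact mul_le_mul_of_nonneg_left (inner_le_kh hK ξ hx) hr
  · rw [abs_of_nonpos hr]
    have := mul_le_mul_of_nonneg_left (inner_le_kh hK ξ (hsym x hx)) (neg_nonneg.2 hr)
    rw [inner_neg_right] at this
    linarith

lemma kh_norm_le {n : ℕ} {K : Set (KE n)} (hne : K.Nonempty) {M : ℝ}
    (hM : ∀ x ∈ K, ‖x‖ ≤ M) (ξ : KE n) : kh K ξ ≤ M * ‖ξ‖ := by
  refine kh_le hne _ fun x hx => ?_
  refine (real_inner_le_norm _ _).trans ?_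
  rw [mul_comm]
  exact mul_le_mul_of_nonneg_right (hM x hx) (norm_nonneg _)

lemma kh_cont {n : ℕ} {K : Set (KE n)} (hK : IsCompact K) (hne : K.Nonempty) :
    Continuous (kh K) := by
  obtain ⟨M, hM⟩ := hK.isBounded.exists_norm_le
  have hM' : ∀ x ∈ K, ‖x‖ ≤ max M 0 := fun x hx => (hM x hx).trans (le_max_left _ _)
  have : LipschitzWith ⟨max M 0, le_max_right _ _⟩ (kh K) := by
    refine LipschitzWith.of_le_add_mul _ fun x y => ?_
    have h1 := kh_add hK hne y (x - y)
    rw [add_sub_cancel] at h1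
    have h2 := kh_norm_le hne hM' (x - y)
    rw [dist_eq_norm]
    exact h1.trans (add_le_add_right h2 _)
  exact this.continuous

lemma kh_zero {n : ℕ} {K : Set (KE n)} (hne : K.Nonempty) : kh K 0 = 0 := by
  unfold kh
  simp [hne]

lemma kh_eq_zero {n : ℕ} {K : Set (KE n)} (hK : IsCompact K) {r : ℝ} (hr : 0 < r)
    (hball : Metric.ball 0 r ⊆ K) {ξ : KE n} (h : kh K ξ = 0) : ξ = 0 := by
  by_contra hne
  have hpos : 0 < ‖ξ‖ := norm_pos_iff.2 hne
  have hx : (r / (2 * ‖ξ‖)) • ξ ∈ K := by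
    apply hball
    rw [mem_ball_zero_iff, norm_smul, Real.norm_eq_abs, abs_of_pos (by positivity)]
    have : r / (2 * ‖ξ‖) * ‖ξ‖ = r / 2 := by field_simp
    linarith
  have := inner_le_kh hK ξ hx
  rw [h, real_inner_smul_right, real_inner_self_eq_norm_sq] at this
  have : 0 < r / (2 * ‖ξ‖) * ‖ξ‖ ^ 2 := by positivity
  linarith

lemma kh_volume {n : ℕ} {K : Set (KE n)} (hK : IsCompact K) (hne : K.Nonempty)
    (hsym : ∀ x ∈ K, -x ∈ K) {r : ℝ} (hr : 0 < r) (hball : Metric.ball 0 r ⊆ K) :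
    volume {ξ : KE n | kh K ξ < 1} =
      ENNReal.ofReal ((∫ ξ, Real.exp (-kh K ξ)) / n.factorial) := by
  have := measure_lt_one_eq_integral_div_gamma (μ := (volume : Measure (KE n))) (g := kh K)
    (kh_zero hne) (kh_neg hK hne hsym) (kh_add hK hne) (kh_eq_zero hK hr hball)
    (fun r x => kh_smul_le hK hne hsym r x) (p := 1) one_pos
  simpa [Real.Gamma_nat_eq_factorial] using this

lemma kh_integrable {n : ℕ} {K : Set (KE n)} (hK : IsCompact K) (hne : K.Nonempty)
    (hsym : ∀ x ∈ K, -x ∈ K) {r : ℝ} (hr : 0 < r) (hball : Metric.ball 0 r ⊆ K) :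
    Integrable (fun ξ : KE n => Real.exp (-kh K ξ)) := by
  by_contra hni
  have h := kh_volume hK hne hsym hr hball
  rw [integral_undef hni, zero_div, ENNReal.ofReal_zero] at h
  have ho : IsOpen {ξ : KE n | kh K ξ < 1} := isOpen_lt (kh_cont hK hne) continuous_const
  rw [ho.measure_eq_zero_iff volume] at h
  have : (0 : KE n) ∈ {ξ : KE n | kh K ξ < 1} := by
    change kh K 0 < 1
    rw [kh_zero hne]; exact one_pos
  rw [h] at this
  exact this

lemma exists_proj {n : ℕ} {K : Set (KE n)} (hK : IsCompact K) (hne : K.Nonempty)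
    (hconv : Convex ℝ K) :
    ∃ P : KE n → KE n, (∀ y, P y ∈ K) ∧ ∀ y, ∀ w ∈ K, ⟪y - P y, w - P y⟫ ≤ 0 := by
  choose P hP using exists_norm_eq_iInf_of_complete_convex hne hK.isComplete hconv
  exact ⟨P, fun y => (hP y).1, fun y =>
    (norm_eq_iInf_iff_real_inner_le_zero hconv (hP y).1).1 (hP y).2⟩

lemma refl_lip {n : ℕ} {K : Set (KE n)} {P : KE n → KE n} (hP : ∀ y, P y ∈ K)
    (hPi : ∀ y, ∀ w ∈ K, ⟪y - P y, w - P y⟫ ≤ 0) :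
    LipschitzWith 1 (fun y => (2 : ℝ) • P y - y) := by
  refine LipschitzWith.of_dist_le_mul fun y z => ?_
  rw [NNReal.coe_one, one_mul, dist_eq_norm, dist_eq_norm]
  have h1 := hPi y (P z) (hP z)
  have h2 := hPi z (P y) (hP y)
  have e : (2 : ℝ) • P y - y - ((2 : ℝ) • P z - z) = (2 : ℝ) • (P y - P z) - (y - z) := by
    rw [smul_sub]; abel
  rw [e]
  refine le_of_sq_le_sq ?_ (norm_nonneg _)
  rw [norm_sub_sq_real, norm_smul, real_inner_smul_left, mul_pow]
  have e1 : ⟪P y - P z, y - z⟫ - ‖P y - P z‖ ^ 2 =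
      -⟪y - P y, P z - P y⟫ - ⟪z - P z, P y - P z⟫ := by
    rw [← real_inner_self_eq_norm_sq]
    simp only [inner_sub_left, inner_sub_right]
    rw [real_inner_comm (P y) y, real_inner_comm (P z) y, real_inner_comm (P y) z,
      real_inner_comm (P z) z]
    ring
  norm_num
  linarith

lemma half_diff {n : ℕ} (p y : KE n) :
    ‖y‖ ^ 2 - ‖(2 : ℝ) • p - y‖ ^ 2 = 4 * ⟪y - p, p⟫ := by
  rw [norm_sub_sq_real, norm_smul, real_inner_smul_left, mul_pow, inner_sub_left,
    real_inner_self_eq_norm_sq, real_inner_comm]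
  norm_num
  ring


/-- test function -/
noncomputable def kg {n : ℕ} (K : Set (KE n)) (U : KE n × KE n) : ENNReal :=
  Set.indicator {x : KE n | (1 / 6 : ℝ) • x ∈ K} (fun _ => (1 : ENNReal)) (U.1 + U.2) *
    ENNReal.ofReal (Real.exp (-kh K ((1 / 2 : ℝ) • (U.1 - U.2))))

lemma kset_meas {n : ℕ} {K : Set (KE n)} (hK : IsCompact K) :
    MeasurableSet {x : KE n | (1 / 6 : ℝ) • x ∈ K} :=
  (hK.isClosed.preimage (f := fun x : KE n => (1 / 6 : ℝ) • x) (by fun_prop)).measurableSet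

lemma kg_meas {n : ℕ} {K : Set (KE n)} (hK : IsCompact K) (hne : K.Nonempty) :
    Measurable (kg K) := by
  have hc := kh_cont hK hne
  unfold kg
  refine Measurable.mul ?_ ?_
  · exact (measurable_const.indicator (kset_meas hK)).comp (measurable_fst.add measurable_snd)
  · have : Continuous (fun U : KE n × KE n =>
      Real.exp (-kh K ((1 / 2 : ℝ) • (U.1 - U.2)))) := by fun_prop
    exact this.measurable.ennreal_ofReal

lemma kset_vol {n : ℕ} (K : Set (KE n)) :
    volume {x : KE n | (1 / 6 : ℝ) • x ∈ K} = ENNReal.ofReal (6 ^ n) * volume K := by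
  have := Measure.addHaar_preimage_smul (volume : Measure (KE n)) (r := (1 / 6 : ℝ))
    (by norm_num) K
  refine this.trans ?_
  congr 2
  rw [finrank_euclideanSpace_fin, abs_of_pos (by positivity)]
  simp

lemma kg_lintegral {n : ℕ} {K : Set (KE n)} (hK : IsCompact K) (hne : K.Nonempty) :
    ∫⁻ U, kg K U = ENNReal.ofReal (6 ^ n) * volume K *
      ∫⁻ ξ, ENNReal.ofReal (Real.exp (-kh K ξ)) := by
  have hc := kh_cont hK hne
  have hf : Measurable (Set.indicator {x : KE n | (1 / 6 : ℝ) • x ∈ K} (fun _ => (1 : ENNReal))) :=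
    measurable_const.indicator (kset_meas hK)
  have hφ : Measurable (fun ξ : KE n => ENNReal.ofReal (Real.exp (-kh K ξ))) := by
    have : Continuous (fun ξ : KE n => Real.exp (-kh K ξ)) := by fun_prop
    exact this.measurable.ennreal_ofReal
  rw [Measure.volume_eq_prod, lintegral_prod_symm' _ (kg_meas hK hne)]
  have h1 : ∀ y : KE n, ∫⁻ x, kg K (x, y) =
      ∫⁻ x, Set.indicator {x : KE n | (1 / 6 : ℝ) • x ∈ K} (fun _ => (1 : ENNReal)) x *
        ENNReal.ofReal (Real.exp (-kh K ((1 / 2 : ℝ) • x - y))) := by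
    intro y
    rw [← lintegral_sub_right_eq_self (fun x => kg K (x, y)) y]
    refine lintegral_congr fun x => ?_
    unfold kg
    have e : (1 / 2 : ℝ) • (x - y - y) = (1 / 2 : ℝ) • x - y := by
      module
    simp only [sub_add_cancel, e]
  simp only [h1]
  rw [lintegral_lintegral_swap]
  · have h2 : ∀ x : KE n, ∫⁻ y, Set.indicator {x : KE n | (1 / 6 : ℝ) • x ∈ K}
        (fun _ => (1 : ENNReal)) x * ENNReal.ofReal (Real.exp (-kh K ((1 / 2 : ℝ) • x - y))) =
        Set.indicator {x : KE n | (1 / 6 : ℝ) • x ∈ K} (fun _ => (1 : ENNReal)) x *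
        ∫⁻ ξ, ENNReal.ofReal (Real.exp (-kh K ξ)) := by
      intro x
      rw [lintegral_const_mul]
      · rw [lintegral_sub_left_eq_self (fun ξ => ENNReal.ofReal (Real.exp (-kh K ξ)))]
      · exact hφ.comp (measurable_const.sub measurable_id)
    simp only [h2]
    rw [lintegral_mul_const _ hf, lintegral_indicator (kset_meas hK), setLIntegral_one,
      kset_vol]
  · refine Measurable.aemeasurable ?_
    refine (hf.comp measurable_snd).mul ?_
    have : Continuous (fun U : KE n × KE n =>
      Real.exp (-kh K ((1 / 2 : ℝ) • U.2 - U.1))) := by fun_prop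
    exact this.measurable.ennreal_ofReal

lemma k_main {n : ℕ} {K : Set (KE n)} (hK : IsCompact K) (hne : K.Nonempty)
    (hconv : Convex ℝ K) (hsym : ∀ x ∈ K, -x ∈ K) {r : ℝ} (hr : 0 < r)
    (hball : Metric.ball 0 r ⊆ K) :
    ENNReal.ofReal ((4 * Real.pi) ^ n) ≤ ENNReal.ofReal (6 ^ n) * volume K *
      ∫⁻ ξ, ENNReal.ofReal (Real.exp (-kh K ξ)) := by
  obtain ⟨P, hP, hPi⟩ := exists_proj hK hne hconv
  have hc := kh_cont hK hne
  have h0K : (0 : KE n) ∈ K := hball (Metric.mem_ball_self hr)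
  have hR := refl_lip hP hPi
  have hP0 : P 0 = 0 := by
    have := hPi 0 0 h0K
    simp only [zero_sub, inner_neg_neg, real_inner_self_eq_norm_sq] at this
    exact norm_eq_zero.1 (pow_eq_zero_iff two_ne_zero |>.1 (le_antisymm this (sq_nonneg _)))
  have hR0 : (fun y => (2 : ℝ) • P y - y) 0 = 0 := by simp [hP0]
  have hPc : Continuous P := by
    have : P = fun y => (1 / 2 : ℝ) • (((2 : ℝ) • P y - y) + y) := by
      funext y; module
    rw [this]
    have := hR.continuous
    exact (this.add continuous_id).const_smul (1 / 2 : ℝ)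
  have hkh : ∀ y, kh K (y - P y) ≤ ⟪y - P y, P y⟫ := by
    intro y
    refine kh_le hne _ fun x hx => ?_
    have := hPi y x hx
    rw [inner_sub_right] at this
    linarith
  have hac : ∀ U : KE n × KE n, -(ka U - kc (fun y => (2 : ℝ) • P y - y) U) / 4 =
      -⟪U.1 - P U.1, P U.1⟫ + -⟪U.2 - P U.2, P U.2⟫ := by
    intro U
    have h1 := half_diff (P U.1) U.1
    have h2 := half_diff (P U.2) U.2
    unfold ka kc
    linarith
  obtain ⟨M, hM⟩ := hK.isBounded.exists_norm_le
  have hI1 : Integrable (fun y : KE n => Real.exp (-⟪y - P y, P y⟫)) := by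
    refine ((kh_integrable hK hne hsym hr hball).const_mul (Real.exp (M * M))).mono' ?_ ?_
    · have : Continuous (fun y : KE n => Real.exp (-⟪y - P y, P y⟫)) := by fun_prop
      exact this.aestronglyMeasurable
    · refine Filter.Eventually.of_forall fun y => ?_
      rw [Real.norm_eq_abs, abs_of_pos (Real.exp_pos _), ← Real.exp_add, Real.exp_le_exp]
      have h1 := kh_add hK hne (y - P y) (P y)
      rw [sub_add_cancel] at h1
      have h2 := kh_norm_le hne hM (P y)
      have h3 := hM (P y) (hP y)
      have h4 : M * ‖P y‖ ≤ M * M :=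
        mul_le_mul_of_nonneg_left h3 ((norm_nonneg _).trans h3)
      have := hkh y
      linarith
  rw [← kg_lintegral hK hne]
  refine kFatou hR hR0 ?_ (kg K) (kg_meas hK hne) ?_
  · simp only [hac, Real.exp_add]
    rw [Measure.volume_eq_prod]
    exact hI1.mul_prod hI1
  · rintro ⟨y, z⟩
    refine ⟨Real.exp (-kh K ((y - P y) - (z - P z))), ?_, ?_⟩
    · have hT : Filter.Tendsto (fun k => kT (fun y => (2 : ℝ) • P y - y) (kt k) (kt k) (y, z))
          Filter.atTop (nhds (kT (fun y => (2 : ℝ) • P y - y) 1 1 (y, z))) := by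
        have : Continuous (fun t : ℝ => kT (fun y => (2 : ℝ) • P y - y) t t (y, z)) := by
          unfold kT; fun_prop
        exact (this.tendsto 1).comp kt_tendsto
      have e1 : (1 / 2 : ℝ) • ((kT (fun y => (2 : ℝ) • P y - y) 1 1 (y, z)).1 -
          (kT (fun y => (2 : ℝ) • P y - y) 1 1 (y, z)).2) = (y - P y) - (z - P z) := by
        simp only [kT]; module
      have e2 : (kT (fun y => (2 : ℝ) • P y - y) 1 1 (y, z)).1 +
          (kT (fun y => (2 : ℝ) • P y - y) 1 1 (y, z)).2 = (2 : ℝ) • (P y + P z) := by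
        simp only [kT]; module
      have hE : Filter.Tendsto (fun U : KE n × KE n =>
          ENNReal.ofReal (Real.exp (-kh K ((1 / 2 : ℝ) • (U.1 - U.2)))))
          (nhds (kT (fun y => (2 : ℝ) • P y - y) 1 1 (y, z)))
          (nhds (ENNReal.ofReal (Real.exp (-kh K ((y - P y) - (z - P z)))))) := by
        rw [← e1]
        have : Continuous (fun U : KE n × KE n =>
          Real.exp (-kh K ((1 / 2 : ℝ) • (U.1 - U.2)))) := by fun_prop
        exact (ENNReal.continuous_ofReal.comp this).tendsto _
      refine (hE.comp hT).congr' ?_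
      have hS : Filter.Tendsto (fun U : KE n × KE n =>
          (1 / 2 : ℝ) • (U.1 + U.2) - (P y + P z))
          (nhds (kT (fun y => (2 : ℝ) • P y - y) 1 1 (y, z))) (nhds 0) := by
        have : Continuous (fun U : KE n × KE n =>
          (1 / 2 : ℝ) • (U.1 + U.2) - (P y + P z)) := by fun_prop
        have h := this.tendsto (kT (fun y => (2 : ℝ) • P y - y) 1 1 (y, z))
        have e3 : (1 / 2 : ℝ) • ((2 : ℝ) • (P y + P z)) - (P y + P z) = 0 := by module
        rw [e2, e3] at h
        exact h
      filter_upwards [(hS.comp hT) (Metric.ball_mem_nhds 0 hr)] with k hk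
      have hv := hball hk
      simp only [Function.comp] at hv ⊢
      unfold kg
      rw [Set.indicator_of_mem, one_mul]
      change (1 / 6 : ℝ) • _ ∈ K
      have := hconv (hP y) (hconv (hP z) hv (a := 1 / 2) (b := 1 / 2) (by norm_num) (by norm_num)
        (by norm_num)) (a := 1 / 3) (b := 2 / 3) (by norm_num) (by norm_num) (by norm_num)
      convert this using 1
      module
    · rw [hac, Real.exp_le_exp]
      have h1 := kh_add hK hne (y - P y) (-(z - P z))
      rw [kh_neg hK hne hsym, ← sub_eq_add_neg] at h1
      have := hkh y
      have := hkh z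
      dsimp only
      linarith

lemma k_polar {n : ℕ} {K : Set (KE n)} (hK : IsCompact K) (hb : ℝ) (hhb : 0 < hb) :
    ENNReal.ofReal (hb ^ n) * volume {ξ : KE n | kh K ξ < 1} ≤ volume (polarDualSet n hb K) := by
  have h := Measure.addHaar_smul (volume : Measure (KE n)) hb {ξ : KE n | kh K ξ < 1}
  rw [finrank_euclideanSpace_fin, abs_of_pos (by positivity)] at h
  rw [← h]
  refine measure_mono ?_
  rintro _ ⟨ξ, hξ, rfl⟩ x hx
  have h1 : ⟪ξ, x⟫ < 1 := (inner_le_kh hK ξ hx).trans_lt hξ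
  change ⟪hb • ξ, x⟫ ≤ hb
  rw [real_inner_smul_left]
  nlinarith

lemma k_ball {n : ℕ} {K : Set (KE n)} (hconv : Convex ℝ K) (hsym : ∀ x ∈ K, -x ∈ K)
    (hint : (interior K).Nonempty) : ∃ r : ℝ, 0 < r ∧ Metric.ball 0 r ⊆ K := by
  obtain ⟨x, hx⟩ := hint
  obtain ⟨r, hr, h⟩ := Metric.isOpen_iff.1 isOpen_interior x hx
  refine ⟨r, hr, fun v hv => ?_⟩
  rw [mem_ball_zero_iff] at hv
  have h1 : x + v ∈ K := interior_subset (h (by simpa [dist_eq_norm] using hv))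
  have h2 : x - v ∈ K := interior_subset (h (by simpa [dist_eq_norm] using hv))
  have := hconv h1 (hsym _ h2) (a := 1 / 2) (b := 1 / 2) (by norm_num) (by norm_num) (by norm_num)
  convert this using 1
  module

/-- **Kuperberg's bound.** For a symmetric convex body `X ⊂ ℝⁿ`, the Mahler volume satisfies
`Vol(X)·Vol(X^ħ) ≥ (πħ)ⁿ/(4ⁿ n!)`. -/
theorem kuperberg_bound (n : ℕ) (hb : ℝ) (hhb : 0 < hb)
    (X : Set (EuclideanSpace ℝ (Fin n)))
    (hXc : IsCompact X) (hXconv : Convex ℝ X) (hXint : (interior X).Nonempty) (hXsym : X = -X) :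
    ENNReal.ofReal ((Real.pi * hb) ^ n / (4 ^ n * (n.factorial : ℝ))) ≤
      volume X * volume (polarDualSet n hb X) := by
  have hsym : ∀ x ∈ X, -x ∈ X := by
    intro x hx
    rw [hXsym] at hx
    exact hx
  have hne : X.Nonempty := hXint.mono interior_subset
  obtain ⟨r, hr, hball⟩ := k_ball hXconv hsym hXint
  have hm := k_main hXc hne hXconv hsym hr hball
  refine le_trans ?_ (mul_le_mul_right (k_polar hXc hb hhb) _)
  rw [kh_volume hXc hne hsym hr hball]
  rw [← ofReal_integral_eq_lintegral_ofReal (kh_integrable hXc hne hsym hr hball)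
    (Filter.Eventually.of_forall fun _ => (Real.exp_pos _).le)] at hm
  have hI : 0 ≤ ∫ ξ, Real.exp (-kh X ξ) := integral_nonneg fun _ => (Real.exp_pos _).le
  rw [← ENNReal.ofReal_toReal hXc.measure_lt_top.ne] at hm ⊢
  have hv : 0 ≤ (volume X).toReal := ENNReal.toReal_nonneg
  generalize (volume X).toReal = v at *
  generalize ∫ ξ, Real.exp (-kh X ξ) = I at *
  rw [← ENNReal.ofReal_mul (by positivity), ← ENNReal.ofReal_mul (by positivity),
    ENNReal.ofReal_le_ofReal_iff (by positivity)] at hm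
  rw [← ENNReal.ofReal_mul (by positivity), ← ENNReal.ofReal_mul (by positivity)]
  refine ENNReal.ofReal_le_ofReal ?_
  have hp : 0 < (n.factorial : ℝ) := by positivity
  have h1 : (Real.pi / 4) ^ n ≤ v * I := by
    have h2 : (4 * Real.pi) ^ n = 6 ^ n * (2 / 3 * Real.pi) ^ n := by
      rw [← mul_pow]; congr 1; ring
    rw [h2, mul_assoc] at hm
    have h3 := le_of_mul_le_mul_left hm (by positivity)
    refine le_trans ?_ h3
    gcongr
    have := Real.pi_pos
    linarith
  have e1 : (Real.pi * hb) ^ n / (4 ^ n * (n.factorial : ℝ)) =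
      (Real.pi / 4) ^ n * (hb ^ n / n.factorial) := by
    rw [mul_pow, div_pow]; field_simp
  have e2 : v * (hb ^ n * (I / n.factorial)) = v * I * (hb ^ n / n.factorial) := by ring
  rw [e1, e2]
  exact mul_le_mul_of_nonneg_right h1 (by positivity)
end

section
/- Let A be a symmetric positive definite n×n real matrix, ħ > 0, X = {x ∈ ℝⁿ : Ax·x ≤ ħ} and X^ħ = {p ∈ ℝⁿ : A^{−1}p·p ≤ ħ}. Then the block-diagonal linear map S on ℝ²ⁿ = ℝⁿ×ℝⁿ given by S(x,p) = (A^{−1/2}x, A^{1/2}p) is symplectic (SᵀJS = J for the standard symplectic matrix J), and S maps the ball B^{2n}(√ħ) ⊂ ℝ²ⁿ into the product X × X^ħ; that is, the image of the phase-space ball under this symplectic map (a 'quantum blob') is contained in X × X^ħ. -/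
open MeasureTheory Matrix

/-- For `A` symmetric positive definite with symmetric positive definite square root `R`
(`R·R = A`), the block-diagonal map `S = diag(A^{−1/2}, A^{1/2})` on `ℝ²ⁿ = ℝⁿ ⊕ ℝⁿ` is
symplectic (`Sᵀ J S = J`) and maps the phase-space ball `B²ⁿ(√ħ)` into `X × X^ħ`, where
`X = {x : Ax·x ≤ ħ}` and `X^ħ = {p : A⁻¹p·p ≤ ħ}`. -/
theorem quantum_blob_in_product (n : ℕ) (hb : ℝ) (hhb : 0 < hb)
    (A : Matrix (Fin n) (Fin n) ℝ) (hAsymm : A.IsSymm) (hApos : A.PosDef)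
    (R : Matrix (Fin n) (Fin n) ℝ) (hRsymm : R.IsSymm) (hRpos : R.PosDef) (hRR : R * R = A)
    (S J : Matrix (Fin n ⊕ Fin n) (Fin n ⊕ Fin n) ℝ)
    (hS : S = Matrix.fromBlocks R⁻¹ 0 0 R)
    (hJ : J = Matrix.fromBlocks 0 1 (-1) 0) :
    S.transpose * J * S = J ∧
      S.mulVec '' {z : Fin n ⊕ Fin n → ℝ | ∑ i, z i ^ 2 ≤ hb} ⊆
        {z : Fin n ⊕ Fin n → ℝ |
          A.mulVec (fun i => z (Sum.inl i)) ⬝ᵥ (fun i => z (Sum.inl i)) ≤ hb ∧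
          A⁻¹.mulVec (fun i => z (Sum.inr i)) ⬝ᵥ (fun i => z (Sum.inr i)) ≤ hb} := by
  have hu : IsUnit R.det := (Matrix.isUnit_iff_isUnit_det R).mp hRpos.isUnit
  have h1 : R * R⁻¹ = 1 := Matrix.mul_nonsing_inv R hu
  have h2 : R⁻¹ * R = 1 := Matrix.nonsing_inv_mul R hu
  have hT : Rᵀ = R := hRsymm
  have hTi : (R⁻¹)ᵀ = R⁻¹ := by rw [Matrix.transpose_nonsing_inv, hT]
  have key : ∀ P Q : Matrix (Fin n) (Fin n) ℝ, Pᵀ = P → P * Q = 1 → ∀ v : Fin n → ℝ,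
      (P * P) *ᵥ (Q *ᵥ v) ⬝ᵥ (Q *ᵥ v) = ∑ i, v i ^ 2 := by
    intro P Q hP hPQ v
    have hQP : Q * P = 1 := mul_eq_one_comm.mp hPQ
    have e1 : (P * P) *ᵥ (Q *ᵥ v) = P *ᵥ v := by
      rw [Matrix.mulVec_mulVec, Matrix.mul_assoc, hPQ, Matrix.mul_one]
    rw [e1, Matrix.dotProduct_mulVec, ← Matrix.mulVec_transpose, Matrix.mulVec_mulVec,
      ← hP, ← Matrix.transpose_mul]
    simp only [hPQ, Matrix.transpose_one, Matrix.one_mulVec, dotProduct, sq]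
  refine ⟨?_, ?_⟩
  · subst hS hJ
    simp [Matrix.fromBlocks_transpose, Matrix.fromBlocks_multiply, hT, hTi, h1, h2]
  · rintro _ ⟨z, hz, rfl⟩
    have hz' : ∑ i, z (Sum.inl i) ^ 2 + ∑ i, z (Sum.inr i) ^ 2 ≤ hb := by
      simpa [Fintype.sum_sum_type] using hz
    have p1 : 0 ≤ ∑ i, z (Sum.inl i) ^ 2 := Finset.sum_nonneg fun i _ => sq_nonneg _
    have p2 : 0 ≤ ∑ i, z (Sum.inr i) ^ 2 := Finset.sum_nonneg fun i _ => sq_nonneg _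
    have hl : (fun i => (S *ᵥ z) (Sum.inl i)) = R⁻¹ *ᵥ (fun i => z (Sum.inl i)) := by
      subst hS; ext i; simp [Matrix.fromBlocks_mulVec]; rfl
    have hr : (fun i => (S *ᵥ z) (Sum.inr i)) = R *ᵥ (fun i => z (Sum.inr i)) := by
      subst hS; ext i; simp [Matrix.fromBlocks_mulVec]; rfl
    have k1 := key R R⁻¹ hT h1 (fun i => z (Sum.inl i))
    have k2 := key R⁻¹ R hTi h2 (fun i => z (Sum.inr i))
    rw [hRR] at k1
    rw [← Matrix.mul_inv_rev, hRR] at k2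
    refine ⟨?_, ?_⟩
    · rw [hl, k1]; linarith
    · rw [hr, k2]; linarith
end
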